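/- Let d ≥ 2. There exist constants C > 1 and 0 < c < 1, depending only on d, such that for every odd prime power q the following holds: if a ∈ F_q^d satisfies a₁² + ⋯ + a_{d−1}² ≠ −a_d, and E ⊆ P + a and F ⊆ F_q^d satisfy |E||F| ≥ C q^d, then |Π(E,F)| ≥ c q. -/

import Mathlib

/-!
Every line through the origin meets the translated paraboloid `P + a` in at most two points: the
points `u • m` on it correspond to roots of a polynomial of degree at most two in `u`, whose
constant term `a₁² + ⋯ + a_{d-1}² + a_d` is nonzero by hypothesis
(`card_units_smul_mem_le`).

For a direction `x`, let `hypVar F x` be the variance over `t` of the number of `y ∈ F` with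
`x · y = t`. It is nonnegative and invariant under scaling `x`, and its sum over all `x` is
`|F| (q - 1) q ^ (d - 1)` by counting pairs in `F` (`sum_hypVar`, a character-free Plancherel
identity). Hence its sum over `E` is at most `2 |F| q ^ (d - 1)` (`sum_hypVar_le`).
With `ν t` the number of `(x, y) ∈ E × F` with `x · y = t` and `M = |E| |F|`, Cauchy–Schwarz
over `x ∈ E` gives `∑ ν² ≤ M² / q + 2 M q ^ (d - 1)`, which is at most `2 M² / q` once
`M ≥ 2 q ^ d`. Cauchy–Schwarz over `t` in the dot product set then gives `|Π(E, F)| ≥ q / 2`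
(`dotSet_card_ge`), so `C = 2` and `c = 1 / 2` work.
-/

open Finset

noncomputable section

/-- dot product on `Fin d → K` -/
def fqDot {K : Type} [Field K] {d : ℕ} (x y : Fin d → K) : K := ∑ i, x i * y i

/-- dot product set Π(E,F) -/
def dotSet {K : Type} [Field K] [DecidableEq K] {d : ℕ}
    (E F : Finset (Fin d → K)) : Finset K :=
  (E ×ˢ F).image fun p => fqDot p.1 p.2

/-- punctured line through the origin and x -/
def lineThrough {K : Type} [Field K] [Fintype K] [DecidableEq K] {d : ℕ}
    (x : Fin d → K) : Finset (Fin d → K) :=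
  univ.filter fun y => ∃ s : K, s ≠ 0 ∧ y = s • x

/-- Fourier transform of the indicator of F -/
def ftransform {K : Type} [Field K] [Fintype K] {d : ℕ}
    (ψ : AddChar K ℂ) (F : Finset (Fin d → K)) (m : Fin d → K) : ℂ :=
  ((Fintype.card K : ℂ) ^ d)⁻¹ * ∑ x ∈ F, ψ (-(fqDot x m))

/-- the quantity 𝔅(E,F) -/
def Bquant {K : Type} [Field K] [Fintype K] [DecidableEq K] {d : ℕ}
    (ψ : AddChar K ℂ) (E F : Finset (Fin d → K)) : ℝ :=
  ∑ x ∈ univ.filter (fun x : Fin d → K => x ≠ 0),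
    ((E ∩ lineThrough x).card : ℝ) * ‖ftransform ψ F x‖ ^ 2
/-- the paraboloid P ⊆ F_q^{n+1} : x₁² + ⋯ + x_n² = x_{n+1} -/
def parab {K : Type} [Field K] [Fintype K] [DecidableEq K] (n : ℕ) :
    Finset (Fin (n + 1) → K) :=
  univ.filter fun x => ∑ i : Fin n, (x i.castSucc) ^ 2 = x (Fin.last n)

/-- Indicator of `x · y = t`. -/
def dotInd {K : Type} [Field K] [DecidableEq K] {d : ℕ} (x y : Fin d → K) (t : K) : ℝ :=
  if fqDot x y = t then 1 else 0

/-- The number of `y ∈ F` on the hyperplane `x · y = t`, as a real number. -/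
def hypCount {K : Type} [Field K] [DecidableEq K] {d : ℕ}
    (F : Finset (Fin d → K)) (x : Fin d → K) (t : K) : ℝ := ∑ y ∈ F, dotInd x y t

/-- The variance of `hypCount F x` over `t`, unnormalised: the sum over `t` of the squared
deviations from the mean `|F| / q`. -/
def hypVar {K : Type} [Field K] [Fintype K] [DecidableEq K] {d : ℕ}
    (F : Finset (Fin d → K)) (x : Fin d → K) : ℝ :=
  ∑ t : K, (hypCount F x t - (F.card : ℝ) / (Fintype.card K : ℝ)) ^ 2

lemma fqDot_smul {K : Type} [Field K] {d : ℕ} (s : K) (x y : Fin d → K) :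
    fqDot (s • x) y = s * fqDot x y := by
  simp [fqDot, Finset.mul_sum, mul_assoc]

lemma fqDot_add {K : Type} [Field K] {d : ℕ} (x x' y : Fin d → K) :
    fqDot (x + x') y = fqDot x y + fqDot x' y := by
  simp [fqDot, Finset.sum_add_distrib, add_mul]

lemma fqDot_sub_right {K : Type} [Field K] {d : ℕ} (x y y' : Fin d → K) :
    fqDot x (y - y') = fqDot x y - fqDot x y' := by
  simp [fqDot, Finset.sum_sub_distrib, mul_sub]

lemma card_pos_real {K : Type} [Field K] [Fintype K] : (0 : ℝ) < (Fintype.card K : ℝ) := by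
  exact_mod_cast Fintype.card_pos

section Counting

variable {K : Type} [Field K] [Fintype K] [DecidableEq K] {d : ℕ}

/-- A hyperplane with normal `z ≠ 0` has `q ^ (d - 1)` points: the level sets of `x ↦ x · z`
are translates of each other. -/
lemma card_mul_sum_dotInd {z : Fin d → K} (hz : z ≠ 0) :
    (Fintype.card K : ℝ) * ∑ x : Fin d → K, dotInd x z 0 = (Fintype.card K : ℝ) ^ d := by
  obtain ⟨i, hi⟩ := Function.ne_iff.mp hz
  have hi : z i ≠ 0 := hi
  have key : ∀ t : K, ∑ x : Fin d → K, dotInd x z t = ∑ x : Fin d → K, dotInd x z 0 := by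
    intro t
    have he : fqDot (Pi.single i (-(t / z i))) z = -t := by
      simp [fqDot, Pi.single_apply, hi]
    refine Fintype.sum_equiv (Equiv.addRight (Pi.single i (-(t / z i)))) _ _ fun x => ?_
    simp only [dotInd, Equiv.coe_addRight, fqDot_add, he]
    congr 1
    rw [← sub_eq_add_neg, sub_eq_zero]
  have h2 : ∑ t : K, ∑ x : Fin d → K, dotInd x z t = (Fintype.card K : ℝ) ^ d := by
    rw [Finset.sum_comm]
    simp [dotInd]
  rw [← h2, Finset.sum_congr rfl fun t _ => key t]
  simp

lemma sum_hypCount (F : Finset (Fin d → K)) (x : Fin d → K) :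
    ∑ t : K, hypCount F x t = F.card := by
  unfold hypCount
  rw [Finset.sum_comm]
  simp [dotInd]

lemma sum_sq_sub_mean (f : K → ℝ) (M : ℝ) (h : ∑ t, f t = M) :
    ∑ t, (f t - M / (Fintype.card K : ℝ)) ^ 2 = ∑ t, f t ^ 2 - M ^ 2 / (Fintype.card K : ℝ) := by
  have hq := (card_pos_real (K := K)).ne'
  simp only [sub_sq, Finset.sum_add_distrib, Finset.sum_sub_distrib, ← Finset.sum_mul,
    ← Finset.mul_sum, h, Finset.sum_const, Finset.card_univ, nsmul_eq_mul]
  field_simp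
  ring

lemma sum_hypCount_sq (F : Finset (Fin d → K)) (x : Fin d → K) :
    ∑ t : K, hypCount F x t ^ 2 = ∑ y ∈ F, ∑ y' ∈ F, dotInd x (y - y') 0 := by
  simp only [hypCount, sq, Finset.sum_mul_sum]
  rw [Finset.sum_comm]
  refine Finset.sum_congr rfl fun y _ => ?_
  rw [Finset.sum_comm]
  refine Finset.sum_congr rfl fun y' _ => ?_
  simp [dotInd, fqDot_sub_right, sub_eq_zero, eq_comm]

/-- Plancherel in counting form: averaging the variance over all directions leaves only the
diagonal pairs of `F × F`. -/
lemma sum_hypVar (F : Finset (Fin d → K)) :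
    (Fintype.card K : ℝ) * ∑ x : Fin d → K, hypVar F x
      = ((Fintype.card K : ℝ) - 1) * (F.card : ℝ) * (Fintype.card K : ℝ) ^ d := by
  have hq := (card_pos_real (K := K)).ne'
  have h1 : ∀ x : Fin d → K, hypVar F x = ∑ y ∈ F, ∑ y' ∈ F, dotInd x (y - y') 0
      - (F.card : ℝ) ^ 2 / (Fintype.card K : ℝ) := fun x => by
    rw [hypVar, sum_sq_sub_mean _ _ (sum_hypCount F x), sum_hypCount_sq]
  have h2 : ∀ y y' : Fin d → K, (Fintype.card K : ℝ) * ∑ x : Fin d → K, dotInd x (y - y') 0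
      = (Fintype.card K : ℝ) ^ d
        + if y = y' then ((Fintype.card K : ℝ) - 1) * (Fintype.card K : ℝ) ^ d else 0 := by
    intro y y'
    split_ifs with h
    · subst h
      simp [dotInd, fqDot]
      ring
    · rw [card_mul_sum_dotInd (sub_ne_zero.mpr h), add_zero]
  have h3 : ∑ x : Fin d → K, ∑ y ∈ F, ∑ y' ∈ F, dotInd x (y - y') 0
      = ∑ y ∈ F, ∑ y' ∈ F, ∑ x : Fin d → K, dotInd x (y - y') 0 := by
    rw [Finset.sum_comm]
    exact Finset.sum_congr rfl fun y _ => Finset.sum_comm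
  simp only [h1, Finset.sum_sub_distrib, mul_sub, h3]
  simp only [Finset.mul_sum]
  simp only [← Finset.mul_sum, h2]
  simp only [Finset.mul_sum]
  simp [Finset.sum_add_distrib]
  field_simp
  ring

lemma hypVar_smul (F : Finset (Fin d → K)) (x : Fin d → K) {s : K} (hs : s ≠ 0) :
    hypVar F (s • x) = hypVar F x := by
  unfold hypVar
  symm
  refine Fintype.sum_equiv (Equiv.mulLeft₀ s hs) _ _ fun t => ?_
  simp [hypCount, dotInd, fqDot_smul, hs]

lemma hypVar_nonneg (F : Finset (Fin d → K)) (x : Fin d → K) : 0 ≤ hypVar F x :=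
  Finset.sum_nonneg fun _ _ => sq_nonneg _

/-- If every point is a nonzero multiple of at most two points of `E`, counted with the
multiplier, then the variances over `E` are controlled by the average over all directions. -/
lemma sum_hypVar_le (E F : Finset (Fin d → K))
    (hE : ∀ m : Fin d → K, ((univ : Finset Kˣ).filter fun s => s⁻¹ • m ∈ E).card ≤ 2) :
    (Fintype.card K : ℝ) * ∑ x ∈ E, hypVar F x
      ≤ 2 * (F.card : ℝ) * (Fintype.card K : ℝ) ^ d := by
  have hq := card_pos_real (K := K)
  have hq1 : (1 : ℝ) < Fintype.card K := by exact_mod_cast Fintype.one_lt_card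
  have hu : (Fintype.card Kˣ : ℝ) = (Fintype.card K : ℝ) - 1 := by
    rw [Fintype.card_units, Nat.cast_sub Fintype.card_pos]
    simp
  have h1 : ((Fintype.card K : ℝ) - 1) * ∑ x ∈ E, hypVar F x
      = ∑ s : Kˣ, ∑ m : Fin d → K, if s⁻¹ • m ∈ E then hypVar F m else 0 := by
    rw [← hu, ← nsmul_eq_mul, ← Finset.card_univ, ← Finset.sum_const]
    refine Finset.sum_congr rfl fun s _ => ?_
    have hmem : ∑ x ∈ E, hypVar F x = ∑ x : Fin d → K, if x ∈ E then hypVar F x else 0 := by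
      rw [Finset.sum_ite_mem, Finset.univ_inter]
    rw [hmem]
    symm
    refine Fintype.sum_equiv (MulAction.toPerm s⁻¹) _ _ fun m => ?_
    have hm : hypVar F (s⁻¹ • m) = hypVar F m := hypVar_smul F m s⁻¹.ne_zero
    simp only [MulAction.toPerm_apply, hm]
  have h2 : ((Fintype.card K : ℝ) - 1) * ∑ x ∈ E, hypVar F x
      ≤ 2 * ∑ m : Fin d → K, hypVar F m := by
    rw [h1, Finset.sum_comm, Finset.mul_sum]
    refine Finset.sum_le_sum fun m _ => ?_
    rw [← Finset.sum_filter, Finset.sum_const, nsmul_eq_mul]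
    exact mul_le_mul_of_nonneg_right (by exact_mod_cast hE m) (hypVar_nonneg F m)
  have h3 := sum_hypVar (K := K) F
  have h4 : ((Fintype.card K : ℝ) - 1) * ((Fintype.card K : ℝ) * ∑ x ∈ E, hypVar F x)
      ≤ ((Fintype.card K : ℝ) - 1) * (2 * (F.card : ℝ) * (Fintype.card K : ℝ) ^ d) := by
    nlinarith
  exact le_of_mul_le_mul_left h4 (by linarith)

/-- Cauchy–Schwarz on the support of the counting function of dot products, together with the
second moment bound coming from `sum_hypVar_le`. -/
lemma dotSet_card_ge (E F : Finset (Fin d → K))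
    (hE : ∀ m : Fin d → K, ((univ : Finset Kˣ).filter fun s => s⁻¹ • m ∈ E).card ≤ 2)
    (hEF : (E.card : ℝ) * (F.card : ℝ) ≥ 2 * (Fintype.card K : ℝ) ^ d) :
    ((dotSet E F).card : ℝ) ≥ 1 / 2 * (Fintype.card K : ℝ) := by
  have hq := card_pos_real (K := K)
  set q : ℝ := (Fintype.card K : ℝ) with hqdef
  set M : ℝ := (E.card : ℝ) * (F.card : ℝ) with hM
  have hMpos : 0 < M := lt_of_lt_of_le (by positivity) hEF
  set ν : K → ℝ := fun t => ∑ x ∈ E, hypCount F x t with hν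
  have hsum : ∑ t, ν t = M := by
    simp only [hν]
    rw [Finset.sum_comm]
    simp [sum_hypCount, hM]
  have hsupp : ∑ t ∈ dotSet E F, ν t = M := by
    rw [← hsum]
    refine Finset.sum_subset (Finset.subset_univ _) fun t _ ht => ?_
    refine Finset.sum_eq_zero fun x hx => Finset.sum_eq_zero fun y hy => ?_
    refine if_neg fun h => ht ?_
    exact Finset.mem_image.mpr ⟨(x, y), Finset.mem_product.mpr ⟨hx, hy⟩, h⟩
  have hCS : M ^ 2 ≤ (dotSet E F).card * ∑ t, ν t ^ 2 := by
    rw [← hsupp]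
    refine sq_sum_le_card_mul_sum_sq.trans ?_
    gcongr
    exact Finset.subset_univ _
  have hvar : ∑ t, (ν t - M / q) ^ 2 ≤ E.card * ∑ x ∈ E, hypVar F x := by
    unfold hypVar
    rw [Finset.sum_comm, Finset.mul_sum]
    refine Finset.sum_le_sum fun t _ => ?_
    refine le_trans (le_of_eq ?_) sq_sum_le_card_mul_sum_sq
    simp only [Finset.sum_sub_distrib, Finset.sum_const, nsmul_eq_mul, hν, hM]
    ring
  rw [sum_sq_sub_mean ν M hsum] at hvar
  have hV := sum_hypVar_le E F hE
  have h5 : q * ∑ t, ν t ^ 2 ≤ 2 * M ^ 2 := by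
    have h6 : q * (∑ t, ν t ^ 2 - M ^ 2 / q) ≤ E.card * (2 * (F.card : ℝ) * q ^ d) := by
      calc q * (∑ t, ν t ^ 2 - M ^ 2 / q) ≤ q * (E.card * ∑ x ∈ E, hypVar F x) := by gcongr
        _ = E.card * (q * ∑ x ∈ E, hypVar F x) := by ring
        _ ≤ _ := by gcongr
    have h7 : q * (M ^ 2 / q) = M ^ 2 := by field_simp
    have h8 : (E.card : ℝ) * (2 * (F.card : ℝ) * q ^ d) = M * (2 * q ^ d) := by
      rw [hM]; ring
    have h9 : M * (2 * q ^ d) ≤ M * M := by gcongr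
    nlinarith
  have h10 : q * M ^ 2 ≤ (dotSet E F).card * (2 * M ^ 2) := by
    calc q * M ^ 2 ≤ q * ((dotSet E F).card * ∑ t, ν t ^ 2) := by gcongr
      _ = (dotSet E F).card * (q * ∑ t, ν t ^ 2) := by ring
      _ ≤ _ := by gcongr
  have h11 : q ≤ (dotSet E F).card * 2 := by
    refine le_of_mul_le_mul_right (a := M ^ 2) ?_ (by positivity)
    linarith
  linarith

end Counting

/-- On the line spanned by `m`, the points `u • m` of the translated paraboloid are given by the
roots `u` of a polynomial of degree at most two whose constant term is nonzero by the condition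
on `a`; this includes the case `m = 0`, where there are none. -/
lemma card_units_smul_mem_le {K : Type} [Field K] [Fintype K] [DecidableEq K] {n : ℕ}
    (a : Fin (n + 1) → K) (ha : ∑ i : Fin n, (a i.castSucc) ^ 2 ≠ -(a (Fin.last n)))
    (E : Finset (Fin (n + 1) → K)) (hE : E ⊆ (parab n).image (· + a)) (m : Fin (n + 1) → K) :
    ((univ : Finset Kˣ).filter fun s => s⁻¹ • m ∈ E).card ≤ 2 := by
  classical
  set A : K := ∑ i : Fin n, (m i.castSucc) ^ 2
  set B : K := -(2 * ∑ i : Fin n, m i.castSucc * a i.castSucc + m (Fin.last n))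
  set D : K := ∑ i : Fin n, (a i.castSucc) ^ 2 + a (Fin.last n)
  have hD : D ≠ 0 := fun h => ha (eq_neg_of_add_eq_zero_left h)
  set p : Polynomial K := Polynomial.C A * Polynomial.X ^ 2 + Polynomial.C B * Polynomial.X
    + Polynomial.C D with hp
  have hp0 : p ≠ 0 := by
    intro h
    apply hD
    have := congrArg (Polynomial.eval 0) h
    simpa [hp] using this
  have hroot : ∀ s : Kˣ, s⁻¹ • m ∈ E → ((s⁻¹ : Kˣ) : K) ∈ p.roots.toFinset := by
    intro s hs
    obtain ⟨y, hy, hya⟩ := Finset.mem_image.mp (hE hs)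
    have hy' : y = s⁻¹ • m - a := eq_sub_of_add_eq hya
    rw [parab, Finset.mem_filter] at hy
    have h := hy.2
    rw [hy'] at h
    simp only [Pi.sub_apply, Pi.smul_apply, Units.smul_def, smul_eq_mul] at h
    set u : K := ((s⁻¹ : Kˣ) : K)
    have hexp : ∑ i : Fin n, (u * m i.castSucc - a i.castSucc) ^ 2
        = A * u ^ 2 - 2 * u * ∑ i : Fin n, m i.castSucc * a i.castSucc
          + ∑ i : Fin n, (a i.castSucc) ^ 2 := by
      simp only [A, Finset.sum_mul, Finset.mul_sum]
      rw [← Finset.sum_sub_distrib, ← Finset.sum_add_distrib]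
      exact Finset.sum_congr rfl fun i _ => by ring
    rw [hexp] at h
    rw [Multiset.mem_toFinset, Polynomial.mem_roots hp0, Polynomial.IsRoot.def]
    simp only [hp, Polynomial.eval_add, Polynomial.eval_mul, Polynomial.eval_C,
      Polynomial.eval_pow, Polynomial.eval_X, B, D]
    linear_combination h
  calc _ ≤ p.roots.toFinset.card := by
        refine Finset.card_le_card_of_injOn (fun s : Kˣ => ((s⁻¹ : Kˣ) : K)) ?_ ?_
        · intro s hs
          exact hroot s (by simpa using hs)
        · intro s _ s' _ h
          exact inv_injective (Units.ext h)
    _ ≤ Multiset.card p.roots := Multiset.toFinset_card_le _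
    _ ≤ p.natDegree := Polynomial.card_roots' p
    _ ≤ 2 := Polynomial.natDegree_quadratic_le

/-- d = n+1 ≥ 2: dot product sets from a suitably translated paraboloid. -/
theorem dotSet_card_translated_parab (n : ℕ) (hd : 2 ≤ n + 1) :
    ∃ C : ℝ, 1 < C ∧ ∃ c : ℝ, 0 < c ∧ c < 1 ∧
      ∀ (K : Type) [Field K] [Fintype K] [DecidableEq K],
        Odd (Fintype.card K) →
        ∀ a : Fin (n + 1) → K,
          (∑ i : Fin n, (a i.castSucc) ^ 2 ≠ -(a (Fin.last n))) →
        ∀ E F : Finset (Fin (n + 1) → K),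
          E ⊆ (parab n).image (· + a) →
          ((E.card : ℝ) * (F.card : ℝ) ≥ C * (Fintype.card K : ℝ) ^ (n + 1)) →
          ((dotSet E F).card : ℝ) ≥ c * (Fintype.card K : ℝ) := by
  refine ⟨2, by norm_num, 1 / 2, by norm_num, by norm_num, ?_⟩
  intro K _ _ _ _ a ha E F hE hEF
  exact dotSet_card_ge E F (card_units_smul_mem_le a ha E hE) hEF
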